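/- arXiv:2007.16107 — 2 statements merged into one kernel-verified Lean document; each statement's English description precedes it below -/
import Mathlib

section
/- Let M be a nonempty finite set (of strategies), n a positive integer, and c : M → ℝⁿ an assignment of cost-coefficient vectors; define the cost C(ρ, p) = Σ_{j=1}^n c(ρ)_j p_j for ρ ∈ M and p ∈ ℝⁿ, the optimal cost C*(p) = min_{ρ ∈ M} C(ρ, p), and ℓ_j = C*(e_j) where e_j is the j-th standard basis vector of ℝⁿ. Let ε > 0, let ρ_1, …, ρ_N ∈ M, and for each i define the polytope S_i = { p ∈ ℝⁿ : p has nonnegative entries, C(ρ_i, p) ≤ C(ρ_k, p) for every k ∈ {1,…,N}, and C(ρ_i, p) − Σ_{j=1}^n ℓ_j p_j ≤ ε }. Then for every i ∈ {1,…,N} and every p ∈ S_i one has C(ρ_i, p) − ε ≤ C*(p) ≤ C(ρ_i, p); that is, the strategy ρ_i is ε-optimal at every parameter value p in the polytope S_i. -/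
/-!
Each `ℓ j` is the least `j`-th cost coefficient over all strategies, so on nonnegative `p` the
linear function `∑ j, ℓ j * p j` lies below the cost of every strategy, hence below the optimal
cost. The last inequality defining the polytope says that the cost of `ρ i` exceeds this lower
bound by at most `ε`.
-/

theorem isGLB_range_univ_inf' {α β : Type*} [Fintype α] [Nonempty α] [SemilatticeInf β]
    (f : α → β) : IsGLB (Set.range f) (Finset.univ.inf' Finset.univ_nonempty f) :=
  ⟨Set.forall_mem_range.2 fun a => Finset.inf'_le f (Finset.mem_univ a),
    fun _ hb => Finset.le_inf' _ f fun a _ => hb (Set.mem_range_self a)⟩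

section

variable {M ι R : Type*} [Fintype ι]

/-- `v` is the optimal cost over the strategies with linear costs `c σ ⬝ᵥ p`. Parameters
are nonnegative, so other values of `v` are left free; an infimum that need not be attained
replaces the minimum, which allows infinitely many strategies. -/
def IsOptimalCost [AddCommMonoid R] [Mul R] [LE R] (c : M → ι → R) (v : (ι → R) → R) : Prop :=
  ∀ p, 0 ≤ p → IsGLB (Set.range fun σ => c σ ⬝ᵥ p) (v p)

theorem isOptimalCost_inf' [Fintype M] [Nonempty M] [AddCommMonoid R] [Mul R] [SemilatticeInf R]
    (c : M → ι → R) :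
    IsOptimalCost c fun p => Finset.univ.inf' Finset.univ_nonempty fun σ => c σ ⬝ᵥ p :=
  fun p _ => isGLB_range_univ_inf' fun σ => c σ ⬝ᵥ p

namespace IsOptimalCost

theorem le_dotProduct [AddCommMonoid R] [Mul R] [LE R] {c : M → ι → R} {v : (ι → R) → R}
    (h : IsOptimalCost c v) {p : ι → R} (hp : 0 ≤ p) (σ : M) : v p ≤ c σ ⬝ᵥ p :=
  (h p hp).1 ⟨σ, rfl⟩

theorem apply_single_one_le [DecidableEq ι] [NonAssocSemiring R] [Preorder R] [ZeroLEOneClass R]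
    {c : M → ι → R} {v : (ι → R) → R} (h : IsOptimalCost c v) (σ : M) (j : ι) :
    v (Pi.single j 1) ≤ c σ j := by
  simpa only [dotProduct_single_one] using
    h.le_dotProduct (Pi.single_nonneg.mpr zero_le_one) σ

theorem dotProduct_apply_single_one_le [DecidableEq ι] [Semiring R] [PartialOrder R]
    [IsOrderedRing R] {c : M → ι → R} {v : (ι → R) → R} (h : IsOptimalCost c v) {p : ι → R}
    (hp : 0 ≤ p) : (fun j => v (Pi.single j 1)) ⬝ᵥ p ≤ v p := by
  refine (h p hp).2 ?_
  rintro _ ⟨σ, rfl⟩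
  exact dotProduct_le_dotProduct_of_nonneg_right (h.apply_single_one_le σ) hp

end IsOptimalCost

theorem eps_optimality_of_mem_polytope_general [DecidableEq ι] [Ring R] [PartialOrder R]
    [IsOrderedRing R] {c : M → ι → R} {v : (ι → R) → R} (hv : IsOptimalCost c v) {ε : R} {σ : M}
    {p : ι → R} (hp : 0 ≤ p) (hε : c σ ⬝ᵥ p - (fun j => v (Pi.single j 1)) ⬝ᵥ p ≤ ε) :
    c σ ⬝ᵥ p - ε ≤ v p ∧ v p ≤ c σ ⬝ᵥ p :=
  ⟨(sub_le_comm.mp hε).trans (hv.dotProduct_apply_single_one_le hp), hv.le_dotProduct hp σ⟩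

end

/-- Theorem 1 of the paper: if the runtime information vector `p` lies in the polytope
`S i`, then the strategy `ρ i` is `ε`-optimal at `p`:
`C (ρ i) p - ε ≤ C*(p) ≤ C (ρ i) p`. -/
theorem eps_optimality_of_mem_polytope
    {M : Type*} [Fintype M] [Nonempty M] {n N : ℕ} (hn : 0 < n)
    (c : M → Fin n → ℝ)
    (C : M → (Fin n → ℝ) → ℝ)
    (hC : ∀ ρ p, C ρ p = ∑ j, c ρ j * p j)
    (Cstar : (Fin n → ℝ) → ℝ)
    (hCstar : ∀ p, Cstar p = Finset.univ.inf' Finset.univ_nonempty (fun ρ => C ρ p))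
    (ℓ : Fin n → ℝ)
    (hℓ : ∀ j, ℓ j = Cstar (Pi.single j 1))
    (ε : ℝ) (hε : 0 < ε)
    (ρ : Fin N → M)
    (S : Fin N → Set (Fin n → ℝ))
    (hS : ∀ i, S i = {p | (∀ j, 0 ≤ p j) ∧ (∀ k, C (ρ i) p ≤ C (ρ k) p) ∧
        C (ρ i) p - ∑ j, ℓ j * p j ≤ ε})
    (i : Fin N) (p : Fin n → ℝ) (hp : p ∈ S i) :
    C (ρ i) p - ε ≤ Cstar p ∧ Cstar p ≤ C (ρ i) p := by
  obtain rfl := funext₂ hC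
  obtain rfl := funext hCstar
  obtain rfl := funext hℓ
  obtain ⟨hp_nonneg, -, hp_gap⟩ := hS i ▸ hp
  exact eps_optimality_of_mem_polytope_general (isOptimalCost_inf' c) hp_nonneg hp_gap
end

section
/- Let M be a nonempty finite set (of strategies), n a positive integer, and c : M → ℝⁿ an assignment of cost-coefficient vectors; define the cost C(ρ, p) = Σ_{j=1}^n c(ρ)_j p_j for ρ ∈ M and p ∈ ℝⁿ, the optimal cost C*(p) = min_{ρ ∈ M} C(ρ, p), and ℓ_j = C*(e_j) where e_j is the j-th standard basis vector of ℝⁿ. Let ε > 0 and ρ₀ ∈ M. If p ∈ ℝⁿ has nonnegative entries and satisfies C(ρ₀, p) − Σ_{j=1}^n ℓ_j p_j ≤ ε, then C(ρ₀, p) − C*(p) ≤ ε. -/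
section OrderedSemiring

variable {M ι R : Type*} [Fintype ι] [Semiring R] [PartialOrder R] [IsOrderedRing R]

theorem dotProduct_mem_lowerBounds_range {c : M → ι → R} {ℓ p : ι → R}
    (hℓ : ℓ ∈ lowerBounds (Set.range c)) (hp : 0 ≤ p) :
    ℓ ⬝ᵥ p ∈ lowerBounds (Set.range fun ρ => c ρ ⬝ᵥ p) := by
  rintro _ ⟨ρ, rfl⟩
  exact dotProduct_le_dotProduct_of_nonneg_right (hℓ ⟨ρ, rfl⟩) hp

theorem dotProduct_single_le_of_isGLB [DecidableEq ι] {c : M → ι → R} {f : (ι → R) → R}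
    (hf : ∀ p, 0 ≤ p → IsGLB (Set.range fun ρ => c ρ ⬝ᵥ p) (f p)) {p : ι → R} (hp : 0 ≤ p) :
    (fun j => f (Pi.single j 1)) ⬝ᵥ p ≤ f p := by
  have coeff_bound : (fun j => f (Pi.single j 1)) ∈ lowerBounds (Set.range c) := by
    rintro _ ⟨ρ, rfl⟩ j
    calc
      f (Pi.single j 1) ≤ c ρ ⬝ᵥ Pi.single j 1 :=
        (hf _ (Pi.single_nonneg.2 zero_le_one)).1 ⟨ρ, rfl⟩
      _ = c ρ j := dotProduct_single_one (c ρ) j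
  exact (hf p hp).2 (dotProduct_mem_lowerBounds_range coeff_bound hp)

end OrderedSemiring

theorem isGLB_range_inf'_univ {M α : Type*} [Fintype M] [Nonempty M] [SemilatticeInf α]
    (f : M → α) : IsGLB (Set.range f) (Finset.univ.inf' Finset.univ_nonempty f) := by
  simp [isGLB_iff_le_iff, mem_lowerBounds, Finset.le_inf'_iff]

theorem eps_suboptimal_of_halfspace_general {M ι R : Type*} [Fintype ι] [DecidableEq ι]
    [Ring R] [PartialOrder R] [IsOrderedRing R]
    {c : M → ι → R} {C : M → (ι → R) → R} (hC : ∀ ρ p, C ρ p = c ρ ⬝ᵥ p)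
    {Cstar : (ι → R) → R} (hCstar : ∀ p, 0 ≤ p → IsGLB (Set.range fun ρ => C ρ p) (Cstar p))
    {ℓ : ι → R} (hℓ : ∀ j, ℓ j = Cstar (Pi.single j 1)) {ε : R} {ρ₀ : M}
    {p : ι → R} (hp : 0 ≤ p) (hhalf : C ρ₀ p - ℓ ⬝ᵥ p ≤ ε) :
    C ρ₀ p - Cstar p ≤ ε := by
  simp only [hC] at hCstar
  have lower_bound : ℓ ⬝ᵥ p ≤ Cstar p := by
    rw [funext hℓ]
    exact dotProduct_single_le_of_isGLB hCstar hp
  exact (sub_le_sub_left lower_bound _).trans hhalf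

/-- Lower-bound step in the proof of Theorem 1: if the nonnegative parameter vector `p`
satisfies `C (ρ₀) p - ℓᵀ p ≤ ε`, then the strategy `ρ₀` is `ε`-suboptimal at `p`. -/
theorem eps_suboptimal_of_halfspace
    {M : Type*} [Fintype M] [Nonempty M] {n : ℕ} (hn : 0 < n)
    (c : M → Fin n → ℝ)
    (C : M → (Fin n → ℝ) → ℝ)
    (hC : ∀ ρ p, C ρ p = ∑ j, c ρ j * p j)
    (Cstar : (Fin n → ℝ) → ℝ)
    (hCstar : ∀ p, Cstar p = Finset.univ.inf' Finset.univ_nonempty (fun ρ => C ρ p))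
    (ℓ : Fin n → ℝ)
    (hℓ : ∀ j, ℓ j = Cstar (Pi.single j 1))
    (ε : ℝ) (hε : 0 < ε)
    (ρ₀ : M)
    (p : Fin n → ℝ) (hp : ∀ j, 0 ≤ p j)
    (hhalf : C ρ₀ p - ∑ j, ℓ j * p j ≤ ε) :
    C ρ₀ p - Cstar p ≤ ε :=
  eps_suboptimal_of_halfspace_general hC
    (fun p _ => hCstar p ▸ isGLB_range_inf'_univ fun ρ => C ρ p) hℓ hp hhalf
end
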